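/- Existential preservation of validity: every valid CPL₀ labelled sequent has a valid ⇝-normal form; that is, if ⊢ L is valid then there exists a finite set Ψ of labelled sequents such that {⊢ L} reduces to Ψ by finitely many ⇝-steps, Ψ is ⇝-normal, and every sequent in Ψ is valid. -/

import Mathlib

open MeasureTheory

/-- The Cantor space `2^ω` of infinite binary sequences. -/
abbrev Cantor : Type := ℕ → Bool

/-- Rational numbers in the unit interval `[0,1]`. -/
abbrev I01 : Type := (Set.Icc (0 : ℚ) 1)

/-- The value of a rational `q ∈ [0,1]` as an extended nonnegative real. -/
noncomputable def qq (q : I01) : ENNReal := ENNReal.ofReal (q.1 : ℝ)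

/-- `μ` is the fair-coin Bernoulli (uniform) product measure on the Cantor space:
it is a probability measure giving each cylinder fixing the values on a finite set `s`
of coordinates the measure `2^{-|s|}`. -/
def IsCantorMeasure (μ : Measure Cantor) : Prop :=
  IsProbabilityMeasure μ ∧
    ∀ (s : Finset ℕ) (v : ℕ → Bool),
      μ {f : Cantor | ∀ i ∈ s, f i = v i} = (2 : ENNReal)⁻¹ ^ s.card

/-- Boolean formulas `b ::= xᵢ | ⊤ | ⊥ | ¬b | b ∧ c | b ∨ c`. -/
inductive BF : Type where
  | var : ℕ → BF
  | tt : BF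
  | ff : BF
  | neg : BF → BF
  | conj : BF → BF → BF
  | disj : BF → BF → BF
deriving DecidableEq

/-- The interpretation `⟦b⟧ ⊆ 2^ω` of a Boolean formula. -/
def BF.sem : BF → Set Cantor
  | .var i => {f | f i = true}
  | .tt => Set.univ
  | .ff => ∅
  | .neg b => (BF.sem b)ᶜ
  | .conj b c => BF.sem b ∩ BF.sem c
  | .disj b c => BF.sem b ∪ BF.sem c

/-- Formulas of univariate counting propositional logic CPL₀:
`A ::= i | ¬A | A ∧ B | A ∨ B | C^q A | D^q A` with `q` a rational in `[0,1]`. -/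
inductive CPL0 : Type where
  | atom : ℕ → CPL0
  | neg : CPL0 → CPL0
  | conj : CPL0 → CPL0 → CPL0
  | disj : CPL0 → CPL0 → CPL0
  | cnt : I01 → CPL0 → CPL0
  | dnt : I01 → CPL0 → CPL0
deriving DecidableEq

open scoped Classical in
/-- The interpretation `⟦A⟧ ⊆ 2^ω` of a CPL₀ formula (relative to the measure `μ`). -/
noncomputable def CPL0.sem (μ : Measure Cantor) : CPL0 → Set Cantor
  | .atom i => {f | f i = true}
  | .neg A => (CPL0.sem μ A)ᶜ
  | .conj A B => CPL0.sem μ A ∩ CPL0.sem μ B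
  | .disj A B => CPL0.sem μ A ∪ CPL0.sem μ B
  | .cnt q A => if qq q ≤ μ (CPL0.sem μ A) then Set.univ else ∅
  | .dnt q A => if μ (CPL0.sem μ A) < qq q then Set.univ else ∅

/-- Labelled formulas: `b ↣ A` (`fwd`) and `b ↢ A` (`bwd`). -/
inductive LF : Type where
  | fwd : BF → CPL0 → LF
  | bwd : BF → CPL0 → LF
deriving DecidableEq

/-- Validity of a labelled formula: `b ↣ A` is valid when `⟦b⟧ ⊆ ⟦A⟧`,
and `b ↢ A` is valid when `⟦A⟧ ⊆ ⟦b⟧`. -/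
def LF.valid (μ : Measure Cantor) : LF → Prop
  | .fwd b A => BF.sem b ⊆ CPL0.sem μ A
  | .bwd b A => CPL0.sem μ A ⊆ BF.sem b

/-- The labelled, one-sided, single-succedent sequent calculus for CPL₀:
`Der μ L` means that the sequent `⊢ L` is derivable. -/
inductive Der (μ : Measure Cantor) : LF → Prop where
  | ax1 {b : BF} {n : ℕ} :
      BF.sem b ⊆ BF.sem (.var n) → Der μ (.fwd b (.atom n))
  | ax2 {b : BF} {n : ℕ} :
      BF.sem (.var n) ⊆ BF.sem b → Der μ (.bwd b (.atom n))
  | runion {b c d : BF} {A : CPL0} :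
      Der μ (.fwd c A) → Der μ (.fwd d A) →
      BF.sem b ⊆ BF.sem (.disj c d) → Der μ (.fwd b A)
  | rinter {b c d : BF} {A : CPL0} :
      Der μ (.bwd c A) → Der μ (.bwd d A) →
      BF.sem (.conj c d) ⊆ BF.sem b → Der μ (.bwd b A)
  | negF {b c : BF} {A : CPL0} :
      Der μ (.bwd c A) → BF.sem b ⊆ BF.sem (.neg c) → Der μ (.fwd b (.neg A))
  | negB {b c : BF} {A : CPL0} :
      Der μ (.fwd c A) → BF.sem (.neg c) ⊆ BF.sem b → Der μ (.bwd b (.neg A))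
  | disjF1 {b : BF} {A B : CPL0} :
      Der μ (.fwd b A) → Der μ (.fwd b (.disj A B))
  | disjF2 {b : BF} {A B : CPL0} :
      Der μ (.fwd b B) → Der μ (.fwd b (.disj A B))
  | disjB {b : BF} {A B : CPL0} :
      Der μ (.bwd b A) → Der μ (.bwd b B) → Der μ (.bwd b (.disj A B))
  | conjF {b : BF} {A B : CPL0} :
      Der μ (.fwd b A) → Der μ (.fwd b B) → Der μ (.fwd b (.conj A B))
  | conjB1 {b : BF} {A B : CPL0} :
      Der μ (.bwd b A) → Der μ (.bwd b (.conj A B))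
  | conjB2 {b : BF} {A B : CPL0} :
      Der μ (.bwd b B) → Der μ (.bwd b (.conj A B))
  | muF {b : BF} {A : CPL0} :
      μ (BF.sem b) = 0 → Der μ (.fwd b A)
  | muB {b : BF} {A : CPL0} :
      μ (BF.sem b) = 1 → Der μ (.bwd b A)
  | cntF {b c : BF} {q : I01} {A : CPL0} :
      Der μ (.fwd c A) → qq q ≤ μ (BF.sem c) → Der μ (.fwd b (.cnt q A))
  | cntB {b c : BF} {q : I01} {A : CPL0} :
      Der μ (.bwd c A) → μ (BF.sem c) < qq q → Der μ (.bwd b (.cnt q A))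
  | dntF {b c : BF} {q : I01} {A : CPL0} :
      Der μ (.bwd c A) → μ (BF.sem c) < qq q → Der μ (.fwd b (.dnt q A))
  | dntB {b c : BF} {q : I01} {A : CPL0} :
      Der μ (.fwd c A) → qq q ≤ μ (BF.sem c) → Der μ (.bwd b (.dnt q A))

/-- Sequents: either a labelled formula `⊢ L`, or the falsum sequent `⊢ ⊥`. -/
inductive Sequent : Type where
  | lf : LF → Sequent
  | falsum : Sequent
deriving DecidableEq

/-- Validity of a sequent: the falsum sequent `⊢ ⊥` is never valid. -/
def Sequent.valid (μ : Measure Cantor) : Sequent → Prop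
  | .lf L => L.valid μ
  | .falsum => False

/-- Derivability of a sequent: the falsum sequent `⊢ ⊥` is never derivable. -/
def Sequent.der (μ : Measure Cantor) : Sequent → Prop
  | .lf L => Der μ L
  | .falsum => False

/-- The one-step decomposition rewriting relation `⇝₀` from a sequent to a
finite set of sequents. -/
inductive Dec0 (μ : Measure Cantor) : Sequent → Finset Sequent → Prop where
  | negF {b c : BF} {A : CPL0} :
      BF.sem b ⊆ BF.sem (.neg c) →
      Dec0 μ (.lf (.fwd b (.neg A))) {Sequent.lf (.bwd c A)}
  | negB {b c : BF} {A : CPL0} :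
      BF.sem (.neg c) ⊆ BF.sem b →
      Dec0 μ (.lf (.bwd b (.neg A))) {Sequent.lf (.fwd c A)}
  | disjF {b c d : BF} {A B : CPL0} :
      BF.sem b ⊆ BF.sem (.disj c d) →
      Dec0 μ (.lf (.fwd b (.disj A B))) {Sequent.lf (.fwd c A), Sequent.lf (.fwd d B)}
  | disjB {b : BF} {A B : CPL0} :
      Dec0 μ (.lf (.bwd b (.disj A B))) {Sequent.lf (.bwd b A), Sequent.lf (.bwd b B)}
  | conjF {b : BF} {A B : CPL0} :
      Dec0 μ (.lf (.fwd b (.conj A B))) {Sequent.lf (.fwd b A), Sequent.lf (.fwd b B)}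
  | conjB {b c d : BF} {A B : CPL0} :
      BF.sem (.conj c d) ⊆ BF.sem b →
      Dec0 μ (.lf (.bwd b (.conj A B))) {Sequent.lf (.bwd c A), Sequent.lf (.bwd d B)}
  | cntF {b c : BF} {q : I01} {A : CPL0} :
      qq q ≤ μ (BF.sem c) →
      Dec0 μ (.lf (.fwd b (.cnt q A))) {Sequent.lf (.fwd c A)}
  | cntB {b c : BF} {q : I01} {A : CPL0} :
      μ (BF.sem c) < qq q →
      Dec0 μ (.lf (.bwd b (.cnt q A))) {Sequent.lf (.bwd c A)}
  | dntF {b c : BF} {q : I01} {A : CPL0} :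
      μ (BF.sem c) < qq q →
      Dec0 μ (.lf (.fwd b (.dnt q A))) {Sequent.lf (.bwd c A)}
  | dntB {b c : BF} {q : I01} {A : CPL0} :
      qq q ≤ μ (BF.sem c) →
      Dec0 μ (.lf (.bwd b (.dnt q A))) {Sequent.lf (.fwd c A)}
  | muF {b : BF} {A : CPL0} :
      μ (BF.sem b) = 0 → Dec0 μ (.lf (.fwd b A)) ∅
  | muB {b : BF} {A : CPL0} :
      μ (BF.sem b) = 1 → Dec0 μ (.lf (.bwd b A)) ∅
  | dnt0 {b : BF} {A : CPL0} :
      μ (BF.sem b) ≠ 0 → Dec0 μ (.lf (.fwd b (.dnt 0 A))) {Sequent.falsum}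
  | cnt0 {b : BF} {A : CPL0} :
      μ (BF.sem b) ≠ 1 → Dec0 μ (.lf (.bwd b (.cnt 0 A))) {Sequent.falsum}

/-- The set-decomposition relation `⇝` on finite sets of sequents:
`Φ ⇝ Ψ` when `Φ = Φ' ∪ {⊢ L}`, `⊢ L ⇝₀ Ψ'` and `Ψ = Φ' ∪ Ψ'`. -/
def Dec (μ : Measure Cantor) (Φ Ψ : Finset Sequent) : Prop :=
  ∃ (Φ' Ψ' : Finset Sequent) (s : Sequent),
    Dec0 μ s Ψ' ∧ Φ = insert s Φ' ∧ Ψ = Φ' ∪ Ψ'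

/-- A finite set of sequents is `⇝`-normal when no decomposition step applies to it. -/
def DecNormal (μ : Measure Cantor) (Φ : Finset Sequent) : Prop :=
  ¬ ∃ Ψ : Finset Sequent, Dec μ Φ Ψ

theorem exists_bf (μ : Measure Cantor) (A : CPL0) : ∃ b : BF, BF.sem b = CPL0.sem μ A := by
  induction A with
  | atom i => exact ⟨.var i, rfl⟩
  | neg A ih => obtain ⟨b, h⟩ := ih; exact ⟨.neg b, by simp [BF.sem, CPL0.sem, h]⟩
  | conj A B ih ih2 =>
    obtain ⟨b, h⟩ := ih; obtain ⟨c, h2⟩ := ih2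
    exact ⟨.conj b c, by simp [BF.sem, CPL0.sem, h, h2]⟩
  | disj A B ih ih2 =>
    obtain ⟨b, h⟩ := ih; obtain ⟨c, h2⟩ := ih2
    exact ⟨.disj b c, by simp [BF.sem, CPL0.sem, h, h2]⟩
  | cnt q A _ =>
    by_cases h : qq q ≤ μ (CPL0.sem μ A)
    · exact ⟨.tt, by simp [BF.sem, CPL0.sem, h]⟩
    · exact ⟨.ff, by simp only [BF.sem, CPL0.sem, if_neg h]⟩
  | dnt q A _ =>
    by_cases h : μ (CPL0.sem μ A) < qq q
    · exact ⟨.tt, by simp [BF.sem, CPL0.sem, h]⟩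
    · exact ⟨.ff, by simp only [BF.sem, CPL0.sem, if_neg h]⟩

def GoodSet (μ : Measure Cantor) (Φ : Finset Sequent) : Prop :=
  ∃ Ψ : Finset Sequent, Relation.ReflTransGen (Dec μ) Φ Ψ ∧
    ∀ s ∈ Ψ, s.valid μ ∧ ∀ T, ¬ Dec0 μ s T

theorem dec_ctx {μ : Measure Cantor} {Φ Ψ : Finset Sequent} (Γ : Finset Sequent)
    (h : Relation.ReflTransGen (Dec μ) Φ Ψ) :
    Relation.ReflTransGen (Dec μ) (Φ ∪ Γ) (Ψ ∪ Γ) := by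
  refine Relation.ReflTransGen.lift (fun X => X ∪ Γ) ?_ _ _ h
  rintro a b ⟨Φ', Ψ', s, h0, rfl, rfl⟩
  refine ⟨Φ' ∪ Γ, Ψ', s, h0, ?_, ?_⟩
  · simp [Finset.insert_union]
  · simp only [Finset.union_right_comm]

theorem goodSet_of {μ : Measure Cantor} (T : Finset Sequent)
    (h : ∀ t ∈ T, GoodSet μ {t}) : GoodSet μ T := by
  induction T using Finset.induction_on with
  | empty => exact ⟨∅, .refl, by simp⟩
  | insert a T _ ih =>
    obtain ⟨P, hP, hP2⟩ := h a (by simp)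
    obtain ⟨Q, hQ, hQ2⟩ := ih (fun t ht => h t (by simp [ht]))
    refine ⟨P ∪ Q, ?_, ?_⟩
    · have h1 := dec_ctx T hP
      have h2 := dec_ctx P hQ
      rw [Finset.union_comm T P, Finset.union_comm Q P] at h2
      rw [Finset.insert_eq]
      exact h1.trans h2
    · intro s hs
      rcases Finset.mem_union.1 hs with hs | hs
      · exact hP2 s hs
      · exact hQ2 s hs

theorem good_step {μ : Measure Cantor} {s : Sequent} {T : Finset Sequent}
    (h0 : Dec0 μ s T) (h : ∀ t ∈ T, GoodSet μ {t}) : GoodSet μ {s} := by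
  obtain ⟨P, hP, hP2⟩ := goodSet_of T h
  refine ⟨P, Relation.ReflTransGen.head ⟨∅, T, s, h0, by simp, by simp⟩ hP, hP2⟩

theorem good_all {μ : Measure Cantor} [IsProbabilityMeasure μ] (A : CPL0) :
    (∀ b, (LF.fwd b A).valid μ → GoodSet μ {Sequent.lf (.fwd b A)}) ∧
    (∀ b, (LF.bwd b A).valid μ → GoodSet μ {Sequent.lf (.bwd b A)}) := by
  induction A with
  | atom i =>
    constructor
    · intro b hv
      by_cases h : μ (BF.sem b) = 0
      · exact good_step (.muF h) (by simp)
      · refine ⟨_, .refl, ?_⟩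
        simp only [Finset.mem_singleton, forall_eq]
        refine ⟨hv, ?_⟩
        intro T hT
        cases hT
        contradiction
    · intro b hv
      by_cases h : μ (BF.sem b) = 1
      · exact good_step (.muB h) (by simp)
      · refine ⟨_, .refl, ?_⟩
        simp only [Finset.mem_singleton, forall_eq]
        refine ⟨hv, ?_⟩
        intro T hT
        cases hT
        contradiction
  | neg A ih =>
    obtain ⟨c, hc⟩ := exists_bf μ A
    constructor
    · intro b hv
      refine good_step (.negF (c := c) ?_) ?_
      · simpa [BF.sem, hc, LF.valid, CPL0.sem] using hv
      · simp only [Finset.mem_singleton, forall_eq]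
        exact ih.2 c hc.ge
    · intro b hv
      refine good_step (.negB (c := c) ?_) ?_
      · simpa only [BF.sem, hc, LF.valid, CPL0.sem] using hv
      · simp only [Finset.mem_singleton, forall_eq]
        exact ih.1 c hc.le
  | conj A B ihA ihB =>
    obtain ⟨c, hc⟩ := exists_bf μ A
    obtain ⟨d, hd⟩ := exists_bf μ B
    constructor
    · intro b hv
      refine good_step .conjF ?_
      simp only [Finset.mem_insert, Finset.mem_singleton, forall_eq_or_imp, forall_eq]
      exact ⟨ihA.1 b (hv.trans Set.inter_subset_left), ihB.1 b (hv.trans Set.inter_subset_right)⟩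
    · intro b hv
      refine good_step (.conjB (c := c) (d := d) ?_) ?_
      · simpa only [BF.sem, hc, hd, LF.valid, CPL0.sem] using hv
      simp only [Finset.mem_insert, Finset.mem_singleton, forall_eq_or_imp, forall_eq]
      exact ⟨ihA.2 c hc.ge, ihB.2 d hd.ge⟩
  | disj A B ihA ihB =>
    obtain ⟨c, hc⟩ := exists_bf μ A
    obtain ⟨d, hd⟩ := exists_bf μ B
    constructor
    · intro b hv
      refine good_step (.disjF (c := c) (d := d) ?_) ?_
      · simpa only [BF.sem, hc, hd, LF.valid, CPL0.sem] using hv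
      simp only [Finset.mem_insert, Finset.mem_singleton, forall_eq_or_imp, forall_eq]
      exact ⟨ihA.1 c hc.le, ihB.1 d hd.le⟩
    · intro b hv
      refine good_step .disjB ?_
      simp only [Finset.mem_insert, Finset.mem_singleton, forall_eq_or_imp, forall_eq]
      exact ⟨ihA.2 b (Set.subset_union_left.trans hv), ihB.2 b (Set.subset_union_right.trans hv)⟩
  | cnt q A ih =>
    obtain ⟨c, hc⟩ := exists_bf μ A
    by_cases h : qq q ≤ μ (CPL0.sem μ A)
    · constructor
      · intro b hv
        refine good_step (.cntF (c := c) (by rwa [hc])) ?_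
        simp only [Finset.mem_singleton, forall_eq]
        exact ih.1 c hc.le
      · intro b hv
        simp only [LF.valid, CPL0.sem, if_pos h, Set.univ_subset_iff] at hv
        exact good_step (.muB (by simp [hv])) (by simp)
    · constructor
      · intro b hv
        simp only [LF.valid, CPL0.sem, if_neg h, Set.subset_empty_iff] at hv
        exact good_step (.muF (by simp [hv])) (by simp)
      · intro b hv
        refine good_step (.cntB (c := c) (by rw [hc]; exact not_le.1 h)) ?_
        simp only [Finset.mem_singleton, forall_eq]
        exact ih.2 c hc.ge
  | dnt q A ih =>
    obtain ⟨c, hc⟩ := exists_bf μ A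
    by_cases h : μ (CPL0.sem μ A) < qq q
    · constructor
      · intro b hv
        refine good_step (.dntF (c := c) (by rwa [hc])) ?_
        simp only [Finset.mem_singleton, forall_eq]
        exact ih.2 c hc.ge
      · intro b hv
        simp only [LF.valid, CPL0.sem, if_pos h, Set.univ_subset_iff] at hv
        exact good_step (.muB (by simp [hv])) (by simp)
    · constructor
      · intro b hv
        simp only [LF.valid, CPL0.sem, if_neg h, Set.subset_empty_iff] at hv
        exact good_step (.muF (by simp [hv])) (by simp)
      · intro b hv
        refine good_step (.dntB (c := c) (by rw [hc]; exact not_lt.1 h)) ?_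
        simp only [Finset.mem_singleton, forall_eq]
        exact ih.1 c hc.le

/-- **Existential preservation of validity.** Every valid CPL₀ labelled
sequent has a valid `⇝`-normal form: if `⊢ L` is valid then `{⊢ L}` reduces, by finitely
many `⇝`-steps, to a `⇝`-normal finite set of sequents all of which are valid. -/
theorem cpl0_valid_has_valid_normal_form
    (μ : Measure Cantor) (hμ : IsCantorMeasure μ)
    (L : LF) (hL : L.valid μ) :
    ∃ Ψ : Finset Sequent,
      Relation.ReflTransGen (Dec μ) {Sequent.lf L} Ψ ∧
      DecNormal μ Ψ ∧ ∀ s ∈ Ψ, s.valid μ := by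
  haveI := hμ.1
  have hg : GoodSet μ {Sequent.lf L} := by
    cases L with
    | fwd b A => exact (good_all A).1 b hL
    | bwd b A => exact (good_all A).2 b hL
  obtain ⟨P, hP, h2⟩ := hg
  refine ⟨P, hP, ?_, fun s hs => (h2 s hs).1⟩
  rintro ⟨Q, Φ', Ψ', s, h0, rfl, rfl⟩
  exact (h2 s (by simp)).2 _ h0
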